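/- Let m ≥ 1 be an integer and let λ_1,…,λ_{2^m−1} ≥ 0, not all zero, satisfy λ_{2^j} = λ_{2^j+1} = … = λ_{2^{j+1}−1} for every 0 ≤ j ≤ m−1. For each integer n ≥ 2 let I_n denote the infimum of P_n(ℓ_1,…,ℓ_n) := Σ_{k=1}^{2^m−1} λ_k Σ_{i=1}^{n−k} (log(S_{i,k+1}/S_{i,k}) + log(S_{i,k+1}/S_{i+1,k})), where S_{i,h} := ℓ_i+…+ℓ_{i+h−1}, over all (ℓ_1,…,ℓ_n) ∈ (0,∞)^n with ℓ_1+…+ℓ_n = 1. Then lim_{n→∞} I_n/n = 2 log 2 · (λ_1 + λ_2 + λ_4 + … + λ_{2^{m−1}}). -/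

import Mathlib

/-!
Write `g i j = log (ℓ_i + … + ℓ_{j-1})` and `F h = ∑ g i (i + h)`, the sum over all windows of
length `h` in `{0, …, n-1}`. The interaction at range `k` equals
`2 (F (k+1) - F k) + g 0 k + g (n-k) n` (`range_sum_eq`), so over the package `a ≤ k < 2a` with
`a = 2^j` it telescopes to `2 (F (2a) - F a)` plus boundary terms. Each window of length `2a` is a
union of two adjacent windows of length `a`, and `log (x + y) ≥ log 2 + (log x + log y) / 2`.
Summing over all windows bounds `2 (F (2a) - F a)` from below by `2 (n - 2a + 1) log 2` minus the
terms `g i (i + a)` with `i` near one of the two ends; since the logarithm is monotone, these are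
absorbed by the boundary terms. Hence each package is at least `2 (n - 2a + 1) log 2`
(`package_lower`).

Conversely, for `ℓ_i = 1/n` the interaction at range `k` is `2 (n - k) log ((k + 1) / k)`, and a
package is at most `2 n log 2`. The two bounds differ by `O(1)`, so dividing by `n` gives the limit.
-/

open Finset Filter Topology

/-- The interaction at range `k` of the step lengths `ℓ_0, …, ℓ_{n-1}`. -/
noncomputable def rangeSum (n : ℕ) (ℓ : ℕ → ℝ) (k : ℕ) : ℝ :=
  ∑ i ∈ Finset.range (n - k),
    (Real.log ((∑ t ∈ Finset.Ico i (i + k + 1), ℓ t) / (∑ t ∈ Finset.Ico i (i + k), ℓ t)) +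
     Real.log ((∑ t ∈ Finset.Ico i (i + k + 1), ℓ t) /
        (∑ t ∈ Finset.Ico (i + 1) (i + 1 + k), ℓ t)))

/-- The logarithm of the length of the window `{i, …, j-1}`. -/
noncomputable def logWin (ℓ : ℕ → ℝ) (i j : ℕ) : ℝ := Real.log (∑ t ∈ Finset.Ico i j, ℓ t)

/-- The sum of `logWin` over all windows of length `h` contained in `{0, …, n-1}`
(for `h ≤ n`; there are `n + 1 - h` of them). -/
noncomputable def logWinSum (n : ℕ) (ℓ : ℕ → ℝ) (h : ℕ) : ℝ :=
  ∑ i ∈ Finset.range (n + 1 - h), logWin ℓ i (i + h)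

lemma win_pos {n : ℕ} {ℓ : ℕ → ℝ} (hℓ : ∀ i ∈ Finset.range n, 0 < ℓ i) {i j : ℕ}
    (hij : i < j) (hj : j ≤ n) : 0 < ∑ t ∈ Finset.Ico i j, ℓ t := by
  apply Finset.sum_pos
  · intro t ht
    apply hℓ
    simp only [Finset.mem_Ico, Finset.mem_range] at *
    omega
  · exact ⟨i, by simp [hij]⟩

lemma logWin_mono {n : ℕ} {ℓ : ℕ → ℝ} (hℓ : ∀ i ∈ Finset.range n, 0 < ℓ i) {i j i' j' : ℕ}
    (hij : i < j) (hi : i' ≤ i) (hj : j ≤ j') (hn : j' ≤ n) :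
    logWin ℓ i j ≤ logWin ℓ i' j' := by
  apply Real.log_le_log (win_pos hℓ hij (hj.trans hn))
  apply Finset.sum_le_sum_of_subset_of_nonneg
  · exact Finset.Ico_subset_Ico hi hj
  · intro t ht _
    apply (hℓ t _).le
    simp only [Finset.mem_Ico, Finset.mem_range] at *
    omega

/-- Concavity of the logarithm, for a window cut into two adjacent ones. -/
lemma logWin_concave {n : ℕ} {ℓ : ℕ → ℝ} (hℓ : ∀ i ∈ Finset.range n, 0 < ℓ i) {i j k : ℕ}
    (hij : i < j) (hjk : j < k) (hn : k ≤ n) :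
    2 * Real.log 2 + logWin ℓ i j + logWin ℓ j k ≤ 2 * logWin ℓ i k := by
  have hx := win_pos hℓ hij (hjk.le.trans hn)
  have hy := win_pos hℓ hjk hn
  unfold logWin
  rw [← Finset.sum_Ico_consecutive ℓ hij.le hjk.le]
  set x := ∑ t ∈ Finset.Ico i j, ℓ t
  set y := ∑ t ∈ Finset.Ico j k, ℓ t
  have h : Real.log (2 ^ 2 * x * y) ≤ Real.log ((x + y) ^ 2) := by
    apply Real.log_le_log (by positivity)
    nlinarith [sq_nonneg (x - y)]
  rw [Real.log_mul (by positivity) (by positivity), Real.log_mul (by positivity) (by positivity),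
    Real.log_pow, Real.log_pow] at h
  exact_mod_cast h

lemma range_sum_eq {n : ℕ} {ℓ : ℕ → ℝ} (hℓ : ∀ i ∈ Finset.range n, 0 < ℓ i) {k : ℕ}
    (hk : 0 < k) (hkn : k ≤ n) :
    rangeSum n ℓ k = 2 * logWinSum n ℓ (k + 1) - 2 * logWinSum n ℓ k
      + logWin ℓ 0 k + logWin ℓ (n - k) n := by
  have h1 : rangeSum n ℓ k = ∑ i ∈ Finset.range (n - k),
      (2 * logWin ℓ i (i + (k + 1)) - logWin ℓ i (i + k) - logWin ℓ (i + 1) (i + 1 + k)) := by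
    apply Finset.sum_congr rfl
    intro i hi
    rw [Finset.mem_range] at hi
    have p1 := win_pos hℓ (show i < i + k + 1 by omega) (by omega)
    have p2 := win_pos hℓ (show i < i + k by omega) (by omega)
    have p3 := win_pos hℓ (show i + 1 < i + 1 + k by omega) (by omega)
    rw [Real.log_div p1.ne' p2.ne', Real.log_div p1.ne' p3.ne']
    simp only [logWin, ← add_assoc]
    ring
  have h2 : logWinSum n ℓ k
      = ∑ i ∈ Finset.range (n - k), logWin ℓ i (i + k) + logWin ℓ (n - k) n := by
    rw [logWinSum, show n + 1 - k = n - k + 1 by omega, Finset.sum_range_succ,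
      show n - k + k = n by omega]
  have h3 : logWinSum n ℓ k
      = ∑ i ∈ Finset.range (n - k), logWin ℓ (i + 1) (i + 1 + k) + logWin ℓ 0 k := by
    rw [logWinSum, show n + 1 - k = n - k + 1 by omega, Finset.sum_range_succ', zero_add]
  have h4 : logWinSum n ℓ (k + 1) = ∑ i ∈ Finset.range (n - k), logWin ℓ i (i + (k + 1)) := by
    rw [logWinSum, show n + 1 - (k + 1) = n - k by omega]
  rw [h1, Finset.sum_sub_distrib, Finset.sum_sub_distrib, ← Finset.mul_sum, h4]
  linarith

lemma package_lower {n : ℕ} {ℓ : ℕ → ℝ} (hℓ : ∀ i ∈ Finset.range n, 0 < ℓ i) {a : ℕ}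
    (ha : 0 < a) (han : 2 * a ≤ n) :
    2 * Real.log 2 * (n - 2 * a + 1) ≤ ∑ k ∈ Finset.Ico a (2 * a), rangeSum n ℓ k := by
  obtain ⟨r, rfl⟩ := Nat.exists_eq_add_of_le han
  set n := 2 * a + r with hn
  have h1 : ∑ k ∈ Finset.Ico a (2 * a), rangeSum n ℓ k
      = 2 * (logWinSum n ℓ (2 * a) - logWinSum n ℓ a)
        + ∑ t ∈ Finset.range a, logWin ℓ 0 (a + t)
        + ∑ t ∈ Finset.range a, logWin ℓ (r + 1 + t) n := by
    have e1 : ∑ k ∈ Finset.Ico a (2 * a), rangeSum n ℓ k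
        = ∑ k ∈ Finset.Ico a (2 * a), (2 * (logWinSum n ℓ (k + 1) - logWinSum n ℓ k)
          + logWin ℓ 0 k + logWin ℓ (n - k) n) := by
      apply Finset.sum_congr rfl
      intro k hk
      rw [Finset.mem_Ico] at hk
      rw [range_sum_eq hℓ (by omega) (by omega)]
      ring
    have e2 : ∑ k ∈ Finset.Ico a (2 * a), logWin ℓ 0 k
        = ∑ t ∈ Finset.range a, logWin ℓ 0 (a + t) := by
      rw [Finset.sum_Ico_eq_sum_range, show 2 * a - a = a by omega]
    have e3 : ∑ k ∈ Finset.Ico a (2 * a), logWin ℓ (n - k) n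
        = ∑ t ∈ Finset.range a, logWin ℓ (r + 1 + t) n := by
      rw [Finset.sum_Ico_eq_sum_range, show 2 * a - a = a by omega, ← Finset.sum_range_reflect]
      apply Finset.sum_congr rfl
      intro t ht
      rw [Finset.mem_range] at ht
      rw [show n - (a + (a - 1 - t)) = r + 1 + t by omega]
    rw [e1, Finset.sum_add_distrib, Finset.sum_add_distrib, ← Finset.mul_sum,
      Finset.sum_Ico_sub _ (by omega), e2, e3]
  have h2 : logWinSum n ℓ a = ∑ i ∈ Finset.range (r + 1), logWin ℓ i (i + a)
      + ∑ t ∈ Finset.range a, logWin ℓ (r + 1 + t) (r + 1 + t + a) := by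
    rw [logWinSum, show n + 1 - a = r + 1 + a by omega, Finset.sum_range_add]
  have h3 : logWinSum n ℓ a = ∑ t ∈ Finset.range a, logWin ℓ t (t + a)
      + ∑ i ∈ Finset.range (r + 1), logWin ℓ (a + i) (a + i + a) := by
    rw [logWinSum, show n + 1 - a = a + (r + 1) by omega, Finset.sum_range_add]
  have h4 : ∑ i ∈ Finset.range (r + 1),
      (2 * Real.log 2 + logWin ℓ i (i + a) + logWin ℓ (a + i) (a + i + a))
      ≤ 2 * logWinSum n ℓ (2 * a) := by
    rw [logWinSum, show n + 1 - 2 * a = r + 1 by omega, Finset.mul_sum]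
    apply Finset.sum_le_sum
    intro i hi
    rw [Finset.mem_range] at hi
    have := logWin_concave hℓ (show i < i + a by omega) (show i + a < i + 2 * a by omega)
      (by omega)
    rwa [show a + i + a = i + 2 * a by omega, add_comm a i]
  rw [Finset.sum_add_distrib, Finset.sum_add_distrib, Finset.sum_const, Finset.card_range,
    nsmul_eq_mul] at h4
  have h5 : ∑ t ∈ Finset.range a, logWin ℓ t (t + a)
      ≤ ∑ t ∈ Finset.range a, logWin ℓ 0 (a + t) := by
    apply Finset.sum_le_sum
    intro t ht
    rw [Finset.mem_range] at ht
    exact logWin_mono hℓ (by omega) (by omega) (by omega) (by omega)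
  have h6 : ∑ t ∈ Finset.range a, logWin ℓ (r + 1 + t) (r + 1 + t + a)
      ≤ ∑ t ∈ Finset.range a, logWin ℓ (r + 1 + t) n := by
    apply Finset.sum_le_sum
    intro t ht
    rw [Finset.mem_range] at ht
    exact logWin_mono hℓ (by omega) (by omega) (by omega) (by omega)
  have h7 : (n : ℝ) - 2 * a + 1 = r + 1 := by rw [hn]; push_cast; ring
  rw [h7, h1]
  push_cast at h4
  linarith

lemma rangeSum_const_le {n k : ℕ} (hn : 0 < n) (hk : 0 < k) :
    rangeSum n (fun _ => 1 / (n : ℝ)) k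
      ≤ 2 * n * (Real.log ((k + 1 : ℕ) : ℝ) - Real.log (k : ℝ)) := by
  have hn' : (0 : ℝ) < n := by exact_mod_cast hn
  have hk' : (0 : ℝ) < k := by exact_mod_cast hk
  have hterm : rangeSum n (fun _ => 1 / (n : ℝ)) k
      = (n - k : ℕ) * (2 * (Real.log ((k + 1 : ℕ) : ℝ) - Real.log (k : ℝ))) := by
    rw [rangeSum, ← nsmul_eq_mul]
    conv_rhs => rw [← Finset.card_range (n - k), ← Finset.sum_const]
    apply Finset.sum_congr rfl
    intro i _
    rw [← Real.log_div (by positivity) (by positivity)]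
    simp only [Finset.sum_const, Nat.card_Ico, nsmul_eq_mul]
    rw [show i + k + 1 - i = k + 1 by omega, show i + k - i = k by omega,
      show i + 1 + k - (i + 1) = k by omega,
      mul_div_mul_right _ _ (by positivity : (1 / (n : ℝ)) ≠ 0)]
    ring
  have hlog : 0 ≤ Real.log ((k + 1 : ℕ) : ℝ) - Real.log (k : ℝ) := by
    rw [sub_nonneg]
    apply Real.log_le_log hk'
    push_cast
    linarith
  have hle : ((n - k : ℕ) : ℝ) ≤ n := by exact_mod_cast Nat.sub_le n k
  rw [hterm]
  nlinarith [mul_le_mul_of_nonneg_right hle hlog]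

lemma package_const_le {n a : ℕ} (hn : 0 < n) (ha : 0 < a) :
    ∑ k ∈ Finset.Ico a (2 * a), rangeSum n (fun _ => 1 / (n : ℝ)) k ≤ 2 * Real.log 2 * n := by
  have ha' : (0 : ℝ) < a := by exact_mod_cast ha
  calc _ ≤ ∑ k ∈ Finset.Ico a (2 * a),
        2 * (n : ℝ) * (Real.log ((k + 1 : ℕ) : ℝ) - Real.log (k : ℝ)) := by
        apply Finset.sum_le_sum
        intro k hk
        rw [Finset.mem_Ico] at hk
        exact rangeSum_const_le hn (by omega)
    _ = 2 * Real.log 2 * n := by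
        rw [← Finset.mul_sum, Finset.sum_Ico_sub (fun k : ℕ => Real.log (k : ℝ)) (by omega)]
        push_cast
        rw [Real.log_mul (by norm_num) ha'.ne']
        ring

lemma sum_dyadic (m : ℕ) (lam A : ℕ → ℝ)
    (hdyad : ∀ j < m, ∀ k : ℕ, 2 ^ j ≤ k → k < 2 ^ (j + 1) → lam k = lam (2 ^ j)) :
    ∑ k ∈ Finset.Icc 1 (2 ^ m - 1), lam k * A k
      = ∑ j ∈ Finset.range m, lam (2 ^ j) * ∑ k ∈ Finset.Ico (2 ^ j) (2 * 2 ^ j), A k := by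
  have hI : Finset.Icc 1 (2 ^ m - 1) = Finset.Ico 1 (2 ^ m) := by
    ext k
    have := Nat.one_le_two_pow (n := m)
    simp only [Finset.mem_Icc, Finset.mem_Ico]
    omega
  rw [hI]
  clear hI
  induction m with
  | zero => simp
  | succ m ih =>
    rw [Finset.sum_range_succ, ← ih (fun j hj => hdyad j (by omega)),
      ← Finset.sum_Ico_consecutive _ (Nat.one_le_two_pow (n := m))
        (Nat.pow_le_pow_right (by norm_num) (Nat.le_succ m)), Finset.mul_sum, ← pow_succ']
    congr 1
    apply Finset.sum_congr rfl
    intro k hk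
    rw [Finset.mem_Ico] at hk
    rw [hdyad m (by omega) k hk.1 hk.2]

/-- asymptotics of the minimum problems for interaction laws in `𝒫𝒞𝒜₂`
(coefficients equal in packages of powers of two), `p = 1`. Here
`S i h = ℓ_i + … + ℓ_{i+h-1}` (0-based indices). -/
theorem asymptotics_PCA2 (m : ℕ) (hm : 1 ≤ m) (lam : ℕ → ℝ)
    (hpos : ∀ k ∈ Finset.Icc 1 (2 ^ m - 1), 0 ≤ lam k)
    (hne : ∃ k ∈ Finset.Icc 1 (2 ^ m - 1), lam k ≠ 0)
    (hdyad : ∀ j < m, ∀ k : ℕ, 2 ^ j ≤ k → k < 2 ^ (j + 1) → lam k = lam (2 ^ j)) :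
    Tendsto (fun n : ℕ =>
        sInf {y : ℝ | ∃ ℓ : ℕ → ℝ, (∀ i ∈ Finset.range n, 0 < ℓ i) ∧
          (∑ i ∈ Finset.range n, ℓ i) = 1 ∧
          y = ∑ k ∈ Finset.Icc 1 (2 ^ m - 1), lam k * ∑ i ∈ Finset.range (n - k),
            (Real.log ((∑ t ∈ Finset.Ico i (i + k + 1), ℓ t) /
                (∑ t ∈ Finset.Ico i (i + k), ℓ t)) +
             Real.log ((∑ t ∈ Finset.Ico i (i + k + 1), ℓ t) /
                (∑ t ∈ Finset.Ico (i + 1) (i + 1 + k), ℓ t)))} / (n : ℝ))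
      atTop (𝓝 (2 * Real.log 2 * ∑ j ∈ Finset.range m, lam (2 ^ j))) := by
  have hl : ∀ j ∈ Finset.range m, 0 ≤ lam (2 ^ j) := by
    intro j hj
    rw [Finset.mem_range] at hj
    have h1 := Nat.one_le_two_pow (n := j)
    have h2 := Nat.pow_lt_pow_right (a := 2) (by norm_num) hj
    exact hpos _ (Finset.mem_Icc.mpr ⟨h1, by omega⟩)
  have hlog2 : 0 < Real.log 2 := Real.log_pos (by norm_num)
  set C := 2 * Real.log 2 * ∑ j ∈ Finset.range m, lam (2 ^ j) with hC
  set D := ∑ j ∈ Finset.range m, lam (2 ^ j) * (2 * Real.log 2 * (2 * 2 ^ j)) with hD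
  have hlower : ∀ n : ℕ, 2 ^ m ≤ n → ∀ ℓ : ℕ → ℝ, (∀ i ∈ Finset.range n, 0 < ℓ i) →
      C * n - D ≤ ∑ k ∈ Finset.Icc 1 (2 ^ m - 1), lam k * rangeSum n ℓ k := by
    intro n hn ℓ hℓ
    rw [sum_dyadic m lam _ hdyad, hC, hD, mul_assoc, mul_comm (∑ j ∈ Finset.range m, _) (n : ℝ),
      ← mul_assoc, Finset.mul_sum, ← Finset.sum_sub_distrib]
    apply Finset.sum_le_sum
    intro j hj
    have h2j : 2 * 2 ^ j ≤ n := by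
      rw [← pow_succ']
      exact (Nat.pow_le_pow_right (by norm_num) (Finset.mem_range.mp hj)).trans hn
    have h := mul_le_mul_of_nonneg_left (package_lower hℓ (Nat.two_pow_pos j) h2j) (hl j hj)
    have h' := mul_nonneg (hl j hj) hlog2.le
    push_cast at h
    nlinarith
  have hlim : Tendsto (fun n : ℕ => C - D / (n : ℝ)) atTop (𝓝 C) := by
    simpa using tendsto_const_nhds.sub (tendsto_const_div_atTop_nhds_zero_nat D)
  refine tendsto_of_tendsto_of_tendsto_of_le_of_le' hlim tendsto_const_nhds ?_ ?_
  all_goals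
    filter_upwards [eventually_ge_atTop (2 ^ m)] with n hn
    have hn0 : 0 < n := (Nat.two_pow_pos m).trans_le hn
    have hn' : (0 : ℝ) < n := by exact_mod_cast hn0
    have hu : ∑ i ∈ Finset.range n, (fun _ : ℕ => 1 / (n : ℝ)) i = 1 := by
      simp [hn'.ne']
  · rw [le_div_iff₀ hn', sub_mul, div_mul_cancel₀ _ hn'.ne']
    -- the set is nonempty, so the infimum is not the junk value `0`
    refine le_csInf ⟨_, fun _ => 1 / (n : ℝ), fun _ _ => by positivity, hu, rfl⟩ ?_
    rintro y ⟨ℓ, hℓ, -, rfl⟩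
    exact hlower n hn ℓ hℓ
  · rw [div_le_iff₀ hn']
    refine le_trans (csInf_le ⟨C * n - D, ?_⟩
      (Exists.intro (fun _ => 1 / (n : ℝ)) ⟨fun _ _ => by positivity, hu, rfl⟩)) ?_
    · rintro y ⟨ℓ, hℓ, -, rfl⟩
      exact hlower n hn ℓ hℓ
    · change ∑ k ∈ Finset.Icc 1 (2 ^ m - 1), lam k * rangeSum n (fun _ => 1 / (n : ℝ)) k ≤ C * n
      rw [sum_dyadic m lam _ hdyad, hC, mul_assoc, mul_comm (∑ j ∈ Finset.range m, _) (n : ℝ),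
        ← mul_assoc, Finset.mul_sum]
      apply Finset.sum_le_sum
      intro j hj
      rw [mul_comm]
      exact mul_le_mul_of_nonneg_right (package_const_le hn0 (Nat.two_pow_pos j)) (hl j hj)
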